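/- Let (Ω, ℱ, P) be a probability space, T > 0, and let A ⊆ [0, T] × Ω be jointly measurable (with respect to the product of the Lebesgue σ-algebra and ℱ). Define the sojourn time L(s, ω) := ∫₀^s 1_A(r, ω) dr for s ∈ [0, T]. Then for every y ≥ 0: E[(L(T, ·) − y)⁺] = ∫₀^T P{ω : L(s, ω) > y and (s, ω) ∈ A} ds, where z⁺ := max(z, 0). -/

import Mathlib

open MeasureTheory Set Classical
noncomputable section

/-!
For a nonnegative integrand `f`, the primitive `L(s) = ∫ₐˢ f` is continuous and nondecreasing, so it
exceeds the level `y` exactly after the last time `d` at which `L(d) = min y (L(b))`. Integrating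
`f` over `{L > y} = (d, b]` therefore gives `L(b) - L(d) = (L(b) - y)⁺`. Taking expectations and
exchanging the integrals by Fubini's theorem gives the identity, with `f = 1_A(·, ω)`.
-/

theorem exists_Ioc_inter_lt_eq_Ioc_of_monotoneOn {α β : Type*}
    [ConditionallyCompleteLinearOrder α] [TopologicalSpace α] [OrderTopology α] [DenselyOrdered α]
    [LinearOrder β] [TopologicalSpace β] [OrderClosedTopology β]
    {g : α → β} {a b : α} {y : β} (hab : a ≤ b) (hcont : ContinuousOn g (Icc a b))
    (hmono : MonotoneOn g (Icc a b)) (hy : g a ≤ y) :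
    ∃ d ∈ Icc a b, g d = min y (g b) ∧ Ioc a b ∩ {s | y < g s} = Ioc d b := by
  have hlevel : (Icc a b ∩ g ⁻¹' {min y (g b)}).Nonempty :=
    intermediate_value_Icc hab hcont
      ⟨le_min hy (hmono (left_mem_Icc.2 hab) (right_mem_Icc.2 hab) hab), min_le_right _ _⟩
  have hcompact : IsCompact (Icc a b ∩ g ⁻¹' {min y (g b)}) :=
    isCompact_Icc.of_isClosed_subset
      (hcont.preimage_isClosed_of_isClosed isClosed_Icc isClosed_singleton) inter_subset_left
  obtain ⟨d, ⟨hd, hgd : g d = min y (g b)⟩, hlast⟩ := hcompact.exists_isGreatest hlevel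
  refine ⟨d, hd, hgd, Subset.antisymm ?_ ?_⟩
  · rintro s ⟨hs, hys : y < g s⟩
    refine ⟨lt_of_not_ge fun hsd ↦ hys.not_ge ?_, hs.2⟩
    exact (hmono (Ioc_subset_Icc_self hs) hd hsd).trans (hgd.trans_le (min_le_left _ _))
  · intro s hs
    have hsI : s ∈ Icc a b := ⟨hd.1.trans hs.1.le, hs.2⟩
    have hne : g s ≠ min y (g b) := fun h ↦ hs.1.not_ge (hlast ⟨hsI, h⟩)
    have hlt : min y (g b) < g s := (hgd ▸ hmono hd hsI hs.1.le).lt_of_ne' hne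
    refine ⟨⟨hd.1.trans_lt hs.1, hs.2⟩, (min_lt_iff.1 hlt).resolve_right ?_⟩
    exact (hmono hsI (right_mem_Icc.2 hab) hs.2).not_gt

theorem ae_nullMeasurableSet_prodMk_left {α β : Type*} [MeasurableSpace α] [MeasurableSpace β]
    {μ : Measure α} {ν : Measure β} [SFinite ν] {s : Set (α × β)}
    (hs : NullMeasurableSet s (μ.prod ν)) :
    ∀ᵐ x ∂μ, NullMeasurableSet (Prod.mk x ⁻¹' s) ν := by
  filter_upwards [Measure.ae_ae_of_ae_prod hs.toMeasurable_ae_eq] with x hx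
  exact (measurable_prodMk_left (measurableSet_toMeasurable _ s)).nullMeasurableSet.congr hx

section Primitive

variable {ν : Measure ℝ} {a b y : ℝ}

theorem integral_indicator_lt_primitive [NullSingletonClass ν] {f : ℝ → ℝ} (hab : a ≤ b)
    (hf : IntervalIntegrable f ν a b) (hf₀ : 0 ≤ᵐ[ν.restrict (Ioc a b)] f) (hy : 0 ≤ y) :
    ∫ s in a..b, {s | y < ∫ r in a..s, f r ∂ν}.indicator f s ∂ν
      = max ((∫ r in a..b, f r ∂ν) - y) 0 := by
  set L : ℝ → ℝ := fun s ↦ ∫ r in a..s, f r ∂ν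
  have hsub {s t : ℝ} (hs : s ∈ Icc a b) (ht : t ∈ Icc a b) : IntervalIntegrable f ν s t :=
    hf.mono_set (uIcc_subset_uIcc (uIcc_of_le hab ▸ hs) (uIcc_of_le hab ▸ ht))
  have ha : a ∈ Icc a b := left_mem_Icc.2 hab
  have hb : b ∈ Icc a b := right_mem_Icc.2 hab
  have hcont : ContinuousOn L (Icc a b) :=
    uIcc_of_le hab ▸ intervalIntegral.continuousOn_primitive_interval' hf left_mem_uIcc
  have hmono : MonotoneOn L (Icc a b) := fun s hs t ht hst ↦
    intervalIntegral.integral_mono_interval le_rfl hs.1 hst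
      (ae_restrict_of_ae_restrict_of_subset (Ioc_subset_Ioc_right ht.2) hf₀) (hsub ha ht)
  have hLa : L a ≤ y := intervalIntegral.integral_same.trans_le hy
  obtain ⟨d, hd, hLd, hset⟩ := exists_Ioc_inter_lt_eq_Ioc_of_monotoneOn hab hcont hmono hLa
  calc ∫ s in a..b, {s | y < L s}.indicator f s ∂ν
      = ∫ s in d..b, f s ∂ν := by
        rw [intervalIntegral.integral_of_le hab, intervalIntegral.integral_of_le hd.2,
          ← integral_indicator measurableSet_Ioc, indicator_indicator, hset,
          integral_indicator measurableSet_Ioc]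
    _ = L b - L d := (intervalIntegral.integral_interval_sub_left (hsub ha hb) (hsub ha hd)).symm
    _ = max (L b - y) 0 := by rw [hLd, ← max_sub_sub_left, sub_self]

variable {Ω : Type*} [MeasurableSpace Ω] {μ : Measure Ω} [SFinite ν] [SFinite μ]

theorem aestronglyMeasurable_primitive {E : Type*} [NormedAddCommGroup E] [NormedSpace ℝ E]
    {f : ℝ × Ω → E} (hf : AEStronglyMeasurable f ((ν.restrict (Ioc a b)).prod μ)) :
    AEStronglyMeasurable (fun p : ℝ × Ω ↦ ∫ r in a..p.1, f (r, p.2) ∂ν)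
      ((ν.restrict (Ioc a b)).prod μ) := by
  let κ := ν.restrict (Ioc a b)
  have hqmp : Measure.QuasiMeasurePreserving (fun q : (ℝ × Ω) × ℝ ↦ (q.2, q.1.2))
      ((κ.prod μ).prod κ) (κ.prod μ) :=
    Measure.measurePreserving_swap.quasiMeasurePreserving.comp
      (QuasiMeasurePreserving.prodMap Measure.quasiMeasurePreserving_snd (.id κ))
  have hmeas : MeasurableSet {q : (ℝ × Ω) × ℝ | q.2 ≤ q.1.1} :=
    measurableSet_le measurable_snd measurable_fst.fst
  refine ((hf.comp_quasiMeasurePreserving hqmp).indicator hmeas).integral_prod_right'.congr ?_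
  filter_upwards [Measure.quasiMeasurePreserving_fst.ae (ae_restrict_mem measurableSet_Ioc)]
    with ⟨s, ω⟩ hs
  calc ∫ r in Ioc a b, (Iic s).indicator (fun r ↦ f (r, ω)) r ∂ν
      = ∫ r in Ioc a s, f (r, ω) ∂ν := by
        rw [setIntegral_indicator measurableSet_Iic, Ioc_inter_Iic, min_eq_right hs.2]
    _ = ∫ r in a..s, f (r, ω) ∂ν := (intervalIntegral.integral_of_le hs.1.le).symm

theorem nullMeasurableSet_lt_primitive {f : ℝ × Ω → ℝ}
    (hf : AEStronglyMeasurable f ((ν.restrict (Ioc a b)).prod μ)) (y : ℝ) :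
    NullMeasurableSet {p : ℝ × Ω | y < ∫ r in a..p.1, f (r, p.2) ∂ν}
      ((ν.restrict (Ioc a b)).prod μ) :=
  nullMeasurableSet_lt aemeasurable_const (aestronglyMeasurable_primitive hf).aemeasurable

theorem integral_max_primitive_sub [NullSingletonClass ν] {f : ℝ × Ω → ℝ} (hab : a ≤ b)
    (hf : Integrable f ((ν.restrict (Ioc a b)).prod μ))
    (hf₀ : 0 ≤ᵐ[(ν.restrict (Ioc a b)).prod μ] f) (hy : 0 ≤ y) :
    ∫ ω, max ((∫ r in a..b, f (r, ω) ∂ν) - y) 0 ∂μ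
      = ∫ s in a..b, ∫ ω,
          {p : ℝ × Ω | y < ∫ r in a..p.1, f (r, p.2) ∂ν}.indicator f (s, ω) ∂μ ∂ν := by
  set B := {p : ℝ × Ω | y < ∫ r in a..p.1, f (r, p.2) ∂ν}
  have hB : Integrable (B.indicator f) ((ν.restrict (Ioc a b)).prod μ) :=
    hf.indicator₀ (nullMeasurableSet_lt_primitive hf.aestronglyMeasurable y)
  have hf₀_section : ∀ᵐ ω ∂μ, ∀ᵐ s ∂ν.restrict (Ioc a b), 0 ≤ f (s, ω) :=
    Measure.ae_ae_of_ae_prod (Measure.measurePreserving_swap.quasiMeasurePreserving.ae hf₀)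
  have hpath : ∀ᵐ ω ∂μ, max ((∫ r in a..b, f (r, ω) ∂ν) - y) 0
      = ∫ s in Ioc a b, B.indicator f (s, ω) ∂ν := by
    filter_upwards [hf.prod_left_ae, hf₀_section] with ω hfω hf₀ω
    rw [← integral_indicator_lt_primitive hab
      ((intervalIntegrable_iff_integrableOn_Ioc_of_le hab).2 hfω) hf₀ω hy,
      intervalIntegral.integral_of_le hab]
    rfl
  rw [integral_congr_ae hpath, intervalIntegral.integral_of_le hab]
  exact (integral_integral_swap (f := fun s ω ↦ B.indicator f (s, ω)) hB).symm

end Primitive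

/-- For `ν = volume`, null measurability covers every `A` measurable for the product of the Lebesgue
`σ`-algebra with that of `Ω`. -/
theorem sojourn_expectation_identity_general {Ω : Type*} [MeasurableSpace Ω]
    {μ : Measure Ω} [SFinite μ] {ν : Measure ℝ} [SFinite ν] [NullSingletonClass ν]
    {a b : ℝ} (hab : a ≤ b) {A : Set (ℝ × Ω)}
    (hA : NullMeasurableSet A ((ν.restrict (Ioc a b)).prod μ))
    (hA_fin : ((ν.restrict (Ioc a b)).prod μ) A ≠ ⊤) {y : ℝ} (hy : 0 ≤ y) :
    ∫ ω, max ((∫ r in a..b, A.indicator 1 (r, ω) ∂ν) - y) 0 ∂μ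
      = ∫ s in a..b, μ.real {ω | y < ∫ r in a..s, A.indicator 1 (r, ω) ∂ν ∧ (s, ω) ∈ A} ∂ν := by
  have hint : Integrable (A.indicator (1 : ℝ × Ω → ℝ)) ((ν.restrict (Ioc a b)).prod μ) :=
    IntegrableOn.integrable_indicator₀ (integrableOn_const hA_fin) hA
  have hnonneg : 0 ≤ A.indicator (1 : ℝ × Ω → ℝ) := indicator_nonneg fun _ _ ↦ zero_le_one
  rw [integral_max_primitive_sub hab hint (.of_forall hnonneg) hy,
    intervalIntegral.integral_of_le hab, intervalIntegral.integral_of_le hab]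
  have hB := (nullMeasurableSet_lt_primitive hint.aestronglyMeasurable y).inter hA
  refine integral_congr_ae ?_
  filter_upwards [ae_nullMeasurableSet_prodMk_left hB] with s hs
  rw [indicator_indicator]
  exact (integral_indicator₀ hs).trans setIntegral_one_eq_measureReal

/-- Identity (4.2) of the paper in abstract form: for a jointly measurable set
`A ⊆ [0,T] × Ω` with sojourn time `L(s, ω) = ∫₀^s 1_A(r, ω) dr`, one has
`E[(L(T,·) − y)⁺] = ∫₀^T P{L(s,·) > y and (s,·) ∈ A} ds` for every `y ≥ 0`. -/
theorem sojourn_expectation_identity {Ω : Type*} [MeasurableSpace Ω]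
    (μ : Measure Ω) [IsProbabilityMeasure μ]
    (T : ℝ) (hT : 0 < T)
    (A : Set (ℝ × Ω)) (hA : MeasurableSet A)
    (y : ℝ) (hy : 0 ≤ y) :
    (∫ ω, max ((∫ r in (0 : ℝ)..T, if (r, ω) ∈ A then (1 : ℝ) else 0) - y) 0 ∂μ)
      = ∫ s in (0 : ℝ)..T,
          (μ {ω | y < (∫ r in (0 : ℝ)..s, if (r, ω) ∈ A then (1 : ℝ) else 0)
                ∧ (s, ω) ∈ A}).toReal := by
  simpa only [indicator_apply, Pi.one_apply, measureReal_def] using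
    sojourn_expectation_identity_general (μ := μ) (ν := volume) hT.le hA.nullMeasurableSet
      (measure_ne_top _ A) hy
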